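/- Let θ be a cylindric diagram in C_ω. For any two standard tableaux T₁, T₂ ∈ LE(θ), the semi-infinite Bruhat intervals coincide: [e, w_{θ,T₁}) = [e, w_{θ,T₂}) as subsets of the affine Weyl group W. -/

import Mathlib

/-!
The initial word of length `n` of one tableau `T₁` can be pulled to the front of a long enough
initial word of another tableau `T₂`: cells with equal or neighbouring contents are comparable, so
a cell which has to be moved past another one carries a commuting reflection
(`exists_pull_front`, `commute_of_incomparable`). Hence
`w_{θ,T₂}[N] = w_{θ,T₁}[n] · v` with `v` a word of `N - n` letters, and
`w_{θ,T₁}[n] ⪯ w_{θ,T₂}[N]` follows once the words `w_{θ,T}[N]` are known to be reduced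
(`wble_of_reduced`, `len_tabWord`).

Reducedness is seen on level-zero weights. The boundary of a cylindric diagram is recorded by
`A : ℤ → ℤ`, where `(a, a + i)` lies in the diagram iff `a ≤ A i`; the numbers
`c_i = A i + m i / κ` depend on `i` mod `κ` only and define a weight `ζ = Σ c_i α_i`. Along the
`W`-orbit of `ζ` there is a constant `t` with all `c_i - c_{i+1} + t ∈ {0, 1}` (`Good`), so
every simple reflection changes the height `Σ c_i` by at most one. On the other
hand, the simple reflection of content `con x` adds the cell `x` to a diagram in which it is
addable, and raises the height by exactly one. So `w_{θ,T}[n]` raises the height of the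
weight of `θ` with its first `n` cells removed by `n`, and it cannot be written with fewer than
`n` letters.
-/

namespace CylPaper

/-! ## The cylinder and its order -/

abbrev Z2 : Type := ℤ × ℤ

/-- The partial order on ℤ²: (a,b) ≤ (c,d) iff a ≥ c and b ≥ d. -/
def le2 (x y : Z2) : Prop := y.1 ≤ x.1 ∧ y.2 ≤ x.2

/-- The period ω = (m, -ℓ). -/
def om (m l : ℕ) : Z2 := ((m : ℤ), -(l : ℤ))

/-- The cylinder C_ω = ℤ²/ℤω. -/
abbrev Cyl (m l : ℕ) : Type := Z2 ⧸ AddSubgroup.zmultiples (om m l)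

/-- The natural projection π : ℤ² → C_ω. -/
def pr (m l : ℕ) : Z2 →+ Cyl m l := QuotientAddGroup.mk' _

/-- The induced order relation on the cylinder: x ≤ y iff there are lifts with x̃ ≤ ỹ. -/
def cle (m l : ℕ) (x y : Cyl m l) : Prop :=
  ∃ a b : Z2, pr m l a = x ∧ pr m l b = y ∧ le2 a b

/-- A cylindric diagram: a non-trivial order filter of C_ω. -/
def IsCylindric (m l : ℕ) (θ : Set (Cyl m l)) : Prop :=
  θ.Nonempty ∧ θ ≠ Set.univ ∧ ∀ x ∈ θ, ∀ y, cle m l x y → y ∈ θ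

/-- A periodic diagram of period ω: a non-trivial order filter of ℤ² with Θ + ω = Θ. -/
def IsPeriodic (m l : ℕ) (Θ : Set Z2) : Prop :=
  Θ.Nonempty ∧ Θ ≠ Set.univ ∧ (∀ x ∈ Θ, ∀ y, le2 x y → y ∈ Θ) ∧
    (fun p => p + om m l) '' Θ = Θ

/-- A proper order ideal ξ of the sub-poset θ of C_ω. -/
def IsProperIdealOf (m l : ℕ) (θ ξ : Set (Cyl m l)) : Prop :=
  ξ ⊆ θ ∧ ξ ≠ θ ∧ ∀ x ∈ ξ, ∀ y ∈ θ, cle m l y x → y ∈ ξ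

/-- A proper order ideal of the whole cylinder C_ω. -/
def IsProperIdealC (m l : ℕ) (J : Set (Cyl m l)) : Prop :=
  J ≠ Set.univ ∧ ∀ x ∈ J, ∀ y, cle m l y x → y ∈ J

/-- A proper order filter of the whole cylinder C_ω. -/
def IsProperFilterC (m l : ℕ) (J : Set (Cyl m l)) : Prop :=
  J ≠ Set.univ ∧ ∀ x ∈ J, ∀ y, cle m l x y → y ∈ J

/-! ## The content map -/

/-- The content on ℤ²: (a,b) ↦ b - a mod κ (κ = m + ℓ). -/
def conHom (m l : ℕ) : Z2 →+ ZMod (m + l) where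
  toFun p := ((p.2 - p.1 : ℤ) : ZMod (m + l))
  map_zero' := by simp
  map_add' a b := by
    simp only [Prod.fst_add, Prod.snd_add]
    push_cast
    ring

lemma conHom_om (m l : ℕ) : conHom m l (om m l) = 0 := by
  have h : ((m + l : ℕ) : ZMod (m + l)) = 0 := ZMod.natCast_self _
  show ((((om m l).2 - (om m l).1 : ℤ)) : ZMod (m + l)) = 0
  simp only [om]
  push_cast at h ⊢
  linear_combination -h

/-- The content map con : C_ω → ℤ/κℤ. -/
def con (m l : ℕ) : Cyl m l →+ ZMod (m + l) :=
  QuotientAddGroup.lift _ (conHom m l) (by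
    intro x hx
    obtain ⟨k, rfl⟩ := AddSubgroup.mem_zmultiples_iff.mp hx
    simp only [AddMonoidHom.mem_ker, map_zsmul, conHom_om, smul_zero])

/-! ## The affine root system of type A_{κ-1}^{(1)} -/

/-- h*, with coordinates in the basis {α_i (i ∈ ℤ/κℤ), Λ₀}:
`(c, t)` stands for `Σ_i c_i α_i + t Λ₀`. -/
abbrev Hw (κ : ℕ) : Type := (ZMod κ → ℚ) × ℚ

/-- The affine Cartan matrix of type A_{κ-1}^{(1)} (valid for κ ≥ 2). -/
def cartan (κ : ℕ) (i j : ZMod κ) : ℚ :=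
  (if i = j then 2 else 0) + (if i - j = 1 then -1 else 0) + (if i - j = -1 then -1 else 0)

/-- The simple root α_i. -/
def alphaR (κ : ℕ) (i : ZMod κ) : Hw κ := (Pi.single i 1, 0)

/-- The null root δ = Σ_i α_i. -/
def deltaR (κ : ℕ) : Hw κ := (fun _ => 1, 0)

/-- The pairing ⟨ζ, α_i^∨⟩. -/
noncomputable def pairSimple (κ : ℕ) (ζ : Hw κ) (i : ZMod κ) : ℚ :=
  (∑ᶠ j, ζ.1 j * cartan κ i j) + ζ.2 * (if i = 0 then 1 else 0)

/-- The pairing ⟨ζ, β^∨⟩ where β = Σ_i k_i α_i lies in the root lattice,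
so β^∨ = Σ_i k_i α_i^∨. -/
noncomputable def pairCo (κ : ℕ) (ζ β : Hw κ) : ℚ := ∑ᶠ i, β.1 i * pairSimple κ ζ i

/-- The simple reflection s_i : ζ ↦ ζ - ⟨ζ, α_i^∨⟩ α_i, as a map on h*. -/
noncomputable def sFun (κ : ℕ) (i : ZMod κ) (ζ : Hw κ) : Hw κ :=
  ζ - pairSimple κ ζ i • alphaR κ i

/-- The element s_{i₁} s_{i₂} ⋯ s_{i_r} of the affine Weyl group
given by a word [i₁, i₂, …, i_r]. -/
noncomputable def wordProd (κ : ℕ) (L : List (ZMod κ)) : Hw κ → Hw κ :=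
  (L.map (sFun κ)).foldr (· ∘ ·) id

/-- Membership in the affine Weyl group W (generated by the s_i). -/
def Wmem (κ : ℕ) (w : Hw κ → Hw κ) : Prop := ∃ L : List (ZMod κ), wordProd κ L = w

/-- The Coxeter length: the least r such that w is a product of r simple reflections. -/
noncomputable def len (κ : ℕ) (w : Hw κ → Hw κ) : ℕ :=
  sInf {r : ℕ | ∃ L : List (ZMod κ), L.length = r ∧ wordProd κ L = w}

/-- Q₊ = Σ_i ℤ≥0 α_i. -/
def QPos (κ : ℕ) : Set (Hw κ) := {x | x.2 = 0 ∧ ∀ i, ∃ n : ℕ, x.1 i = (n : ℚ)}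

/-- The set R = WΠ of real roots. -/
def Rset (κ : ℕ) : Set (Hw κ) :=
  {β | ∃ (L : List (ZMod κ)) (i : ZMod κ), β = wordProd κ L (alphaR κ i)}

/-- Positive real roots R₊ = R ∩ Q₊. -/
def Rpos (κ : ℕ) : Set (Hw κ) := Rset κ ∩ QPos κ

/-- Negative real roots R₋ = -R₊. -/
def Rneg (κ : ℕ) : Set (Hw κ) := {β | -β ∈ Rpos κ}

/-- The inversion set R(w) = R₊ ∩ w R₋. -/
def invSet (κ : ℕ) (w : Hw κ → Hw κ) : Set (Hw κ) := Rpos κ ∩ (w '' Rneg κ)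

/-- The weak right Bruhat order on W. -/
def wble (κ : ℕ) (v w : Hw κ → Hw κ) : Prop :=
  Relation.ReflTransGen
    (fun u u' => ∃ i : ZMod κ, u' = u ∘ sFun κ i ∧ len κ u' = len κ u + 1) v w

/-- The weak Bruhat interval [e, w]. -/
def bint (κ : ℕ) (w : Hw κ → Hw κ) : Set (Hw κ → Hw κ) :=
  {x | wble κ id x ∧ wble κ x w}

/-- A single commutation move on words: swap adjacent letters i, j with i - j ≠ 0, ±1. -/
def CommMove (κ : ℕ) (L1 L2 : List (ZMod κ)) : Prop :=
  ∃ (u v : List (ZMod κ)) (i j : ZMod κ),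
    i - j ≠ 0 ∧ i - j ≠ 1 ∧ i - j ≠ -1 ∧
    L1 = u ++ i :: j :: v ∧ L2 = u ++ j :: i :: v

/-- A word is reduced if its length equals the Coxeter length of its product. -/
def IsReducedWord (κ : ℕ) (L : List (ZMod κ)) : Prop :=
  len κ (wordProd κ L) = L.length

/-- Fully commutative: any reduced word for w can be obtained from any other
using only commutation moves. -/
def FullyComm (κ : ℕ) (w : Hw κ → Hw κ) : Prop :=
  ∀ L1 L2 : List (ZMod κ),
    IsReducedWord κ L1 → wordProd κ L1 = w →
    IsReducedWord κ L2 → wordProd κ L2 = w →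
    Relation.ReflTransGen (CommMove κ) L1 L2

/-! ## Hooks, bottom set and weights attached to a cylindric diagram -/

/-- α(x) = α_{con(x)}. -/
def alC (m l : ℕ) (x : Cyl m l) : Hw (m + l) := alphaR (m + l) (con m l x)

/-- arm(x) = {x + π(0,k) : k ≥ 1} ∩ θ. -/
def armSet (m l : ℕ) (θ : Set (Cyl m l)) (x : Cyl m l) : Set (Cyl m l) :=
  {y | y ∈ θ ∧ ∃ k : ℕ, 1 ≤ k ∧ y = x + pr m l (0, (k : ℤ))}

/-- leg(x) = {x + π(k,0) : k ≥ 1} ∩ θ. -/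
def legSet (m l : ℕ) (θ : Set (Cyl m l)) (x : Cyl m l) : Set (Cyl m l) :=
  {y | y ∈ θ ∧ ∃ k : ℕ, 1 ≤ k ∧ y = x + pr m l ((k : ℤ), 0)}

/-- The colored hook length hk(x) = α(x) + Σ_{y∈arm(x)} α(y) + Σ_{y∈leg(x)} α(y). -/
noncomputable def hk (m l : ℕ) (θ : Set (Cyl m l)) (x : Cyl m l) : Hw (m + l) :=
  alC m l x + (∑ᶠ y ∈ armSet m l θ x, alC m l y) + (∑ᶠ y ∈ legSet m l θ x, alC m l y)

/-- x is the minimum cell b_i of content i in θ. -/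
def IsBottomCell (m l : ℕ) (θ : Set (Cyl m l)) (i : ZMod (m + l)) (x : Cyl m l) : Prop :=
  x ∈ θ ∧ con m l x = i ∧ ∀ y ∈ θ, con m l y = i → cle m l x y

/-- The bottom set Γ = {b_i : i ∈ ℤ/κℤ}. -/
def btm (m l : ℕ) (θ : Set (Cyl m l)) : Set (Cyl m l) :=
  {x | ∃ i, IsBottomCell m l θ i x}

/-- The maximal elements Γ_max of the bottom set. -/
def btmMax (m l : ℕ) (θ : Set (Cyl m l)) : Set (Cyl m l) :=
  {x | x ∈ btm m l θ ∧ ∀ y ∈ btm m l θ, cle m l x y → y = x}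

/-- The minimal elements Γ_min of the bottom set. -/
def btmMin (m l : ℕ) (θ : Set (Cyl m l)) : Set (Cyl m l) :=
  {x | x ∈ btm m l θ ∧ ∀ y ∈ btm m l θ, cle m l y x → y = x}

open Classical in
/-- The coefficient a_i of Λ_i in the predominant weight P_θ:
1 if b_i ∈ Γ_max, -1 if b_i ∈ Γ_min, 0 otherwise. -/
noncomputable def aC (m l : ℕ) (θ : Set (Cyl m l)) (i : ZMod (m + l)) : ℚ :=
  if ∃ x, IsBottomCell m l θ i x ∧ x ∈ btmMax m l θ then 1
  else if ∃ x, IsBottomCell m l θ i x ∧ x ∈ btmMin m l θ then -1 else 0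

/-- The pairing ⟨P_θ, β^∨⟩ = Σ_i a_i k_i for β = Σ_i k_i α_i,
where P_θ = Σ_i a_i Λ_i (since ⟨Λ_i, α_j^∨⟩ = δ_{ij} and ⟨Λ_i, d⟩ = 0). -/
noncomputable def pairP (m l : ℕ) (θ : Set (Cyl m l)) (β : Hw (m + l)) : ℚ :=
  ∑ᶠ i, aC m l θ i * β.1 i

/-- D(P_θ) = {α ∈ R₊ : ⟨P_θ, α^∨⟩ = -1}. -/
def DSet (m l : ℕ) (θ : Set (Cyl m l)) : Set (Hw (m + l)) :=
  {β | β ∈ Rpos (m + l) ∧ pairP m l θ β = -1}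

/-- The "inversion set" R(w_θ) = {hk(x) : x ∈ θ}. -/
def RwTheta (m l : ℕ) (θ : Set (Cyl m l)) : Set (Hw (m + l)) := hk m l θ '' θ

/-- The set Π_θ = Π_θ^0 ∪ Π_θ^arm ∪ Π_θ^leg. -/
def PiTheta (m l : ℕ) (θ : Set (Cyl m l)) : Set (Hw (m + l)) :=
  {v | ∃ x, x ∈ btm m l θ ∧ x ∉ btmMax m l θ ∧ x ∉ btmMin m l θ ∧ v = alC m l x} ∪
  {v | ∃ x, x ∈ btmMax m l θ ∧ v = alC m l x + ∑ᶠ y ∈ armSet m l θ x, alC m l y} ∪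
  {v | ∃ x, x ∈ btmMax m l θ ∧ v = alC m l x + ∑ᶠ y ∈ legSet m l θ x, alC m l y}

/-- The modified order ⊴ on R(w_θ): α ⊴ β iff β - α ∈ Σ_{γ∈Π_θ} ℤ≥0 γ. -/
def trile (m l : ℕ) (θ : Set (Cyl m l)) (α β : Hw (m + l)) : Prop :=
  β - α ∈ AddSubmonoid.closure (PiTheta m l θ)

/-! ## Standard tableaux (encoded by the inverse enumeration e = T⁻¹ : ℤ≥1 → θ) -/

/-- A standard tableau on θ, given by the enumeration e = T⁻¹ : {1,2,…} → θ.
This is precisely the data of an order-preserving bijection T : θ → ℤ≥1. -/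
def IsTableau (m l : ℕ) (θ : Set (Cyl m l)) (e : ℕ → Cyl m l) : Prop :=
  Set.InjOn e {a : ℕ | 1 ≤ a} ∧ e '' {a : ℕ | 1 ≤ a} = θ ∧
  ∀ a b : ℕ, 1 ≤ a → 1 ≤ b → cle m l (e a) (e b) → e a ≠ e b → a < b

/-- A standard tableau on a finite (skew) diagram ξ with |ξ| = n, encoded by
the enumeration e = S⁻¹ : {1,…,n} → ξ. -/
def IsTableauOn (m l : ℕ) (ξ : Set (Cyl m l)) (n : ℕ) (e : ℕ → Cyl m l) : Prop :=
  Set.InjOn e (Set.Icc 1 n) ∧ e '' Set.Icc 1 n = ξ ∧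
  ∀ a b : ℕ, a ∈ Set.Icc 1 n → b ∈ Set.Icc 1 n → cle m l (e a) (e b) → e a ≠ e b → a < b

/-- The word (con(e 1), con(e 2), …, con(e n)). -/
def tabWord (m l : ℕ) (e : ℕ → Cyl m l) (n : ℕ) : List (ZMod (m + l)) :=
  (List.range n).map (fun k => con m l (e (k + 1)))

/-- The semi-infinite Bruhat interval [e, w_{θ,T}) = ⋃_{n≥1} [e, w_{θ,T}[n]]. -/
def semiInt (m l : ℕ) (e : ℕ → Cyl m l) : Set (Hw (m + l) → Hw (m + l)) :=
  ⋃ n ∈ {n : ℕ | 1 ≤ n}, bint (m + l) (wordProd (m + l) (tabWord m l e n))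

/-- w is P_θ-pluscule: ⟨P_θ, α^∨⟩ = -1 for every α ∈ R(w). -/
def Pluscule (m l : ℕ) (θ : Set (Cyl m l)) (w : Hw (m + l) → Hw (m + l)) : Prop :=
  ∀ β ∈ invSet (m + l) w, pairP m l θ β = -1

/-- The generating relation of the heap order ⪯_T on ℤ≥1. -/
def heapRel (m l : ℕ) (e : ℕ → Cyl m l) (a b : ℕ) : Prop :=
  1 ≤ a ∧ a ≤ b ∧
    (con m l (e a) = con m l (e b) ∨
      sFun (m + l) (con m l (e a)) ∘ sFun (m + l) (con m l (e b)) ≠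
        sFun (m + l) (con m l (e b)) ∘ sFun (m + l) (con m l (e a)))

/-- The generating relation of the heap order ≤^hp on R(w_θ):
α ≤ β whenever β - α ∈ Q₊ (the ordinary order) and ⟨α, β^∨⟩ ≠ 0. -/
def hpRel (m l : ℕ) (θ : Set (Cyl m l)) (α β : Hw (m + l)) : Prop :=
  α ∈ RwTheta m l θ ∧ β ∈ RwTheta m l θ ∧ β - α ∈ QPos (m + l) ∧
    pairCo (m + l) α β ≠ 0

/-- v is the Weyl group element w_ξ of a proper order ideal ξ of θ. -/
def IsIdealWord (m l : ℕ) (θ ξ : Set (Cyl m l)) (v : Hw (m + l) → Hw (m + l)) : Prop :=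
  IsProperIdealOf m l θ ξ ∧
    ∃ n e, IsTableauOn m l ξ n e ∧ v = wordProd (m + l) (tabWord m l e n)

/-- A proper order ideal of the poset (R(w_θ), ⊴). -/
def IsProperIdealOfRw (m l : ℕ) (θ : Set (Cyl m l)) (J : Set (Hw (m + l))) : Prop :=
  J ⊆ RwTheta m l θ ∧ J ≠ RwTheta m l θ ∧
    ∀ β ∈ J, ∀ α ∈ RwTheta m l θ, trile m l θ α β → α ∈ J


/-! ### Words, length and the weak order -/

lemma wordProd_append (κ : ℕ) (L R : List (ZMod κ)) :
    wordProd κ (L ++ R) = wordProd κ L ∘ wordProd κ R := by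
  induction L with
  | nil => rfl
  | cons a L ih =>
    show sFun κ a ∘ wordProd κ (L ++ R) = _
    rw [ih]; rfl

lemma len_le (κ : ℕ) (L : List (ZMod κ)) : len κ (wordProd κ L) ≤ L.length :=
  Nat.sInf_le ⟨L, rfl, rfl⟩

lemma exists_word_len (κ : ℕ) (L : List (ZMod κ)) :
    ∃ L' : List (ZMod κ), L'.length = len κ (wordProd κ L) ∧ wordProd κ L' = wordProd κ L :=
  Nat.sInf_mem (s := {r : ℕ | ∃ L' : List (ZMod κ), L'.length = r ∧
    wordProd κ L' = wordProd κ L}) ⟨_, L, rfl, rfl⟩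

lemma len_append_le (κ : ℕ) (L R : List (ZMod κ)) :
    len κ (wordProd κ (L ++ R)) ≤ len κ (wordProd κ L) + R.length := by
  obtain ⟨L', h1, h2⟩ := exists_word_len κ L
  have := len_le κ (L' ++ R)
  rw [wordProd_append, h2, ← wordProd_append, List.length_append] at this
  omega

/-- A prefix of a reduced word is a lower bound of the whole word in the weak right order. -/
lemma wble_of_reduced (κ : ℕ) (L R : List (ZMod κ)) (h : IsReducedWord κ (L ++ R)) :
    wble κ (wordProd κ L) (wordProd κ (L ++ R)) := by
  induction R using List.reverseRecOn with
  | nil => rw [List.append_nil]; exact Relation.ReflTransGen.refl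
  | append_singleton R i ih =>
    have h' : IsReducedWord κ (L ++ R) := by
      have h1 := len_append_le κ (L ++ R) [i]
      have h2 := len_le κ (L ++ R)
      unfold IsReducedWord at *
      rw [← List.append_assoc] at h
      simp only [List.length_append, List.length_singleton] at *
      omega
    refine (ih h').tail ⟨i, ?_, ?_⟩
    · rw [← List.append_assoc, wordProd_append]; rfl
    · unfold IsReducedWord at h h'
      rw [h, h']
      simp only [List.length_append, List.length_singleton]
      omega

/-! ### Pulling a linear extension to the front of another one -/

/-- `L₁` and `L₂` list elements in an order compatible with `R`, and `L₁` is an `R`-ideal of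
`L₂`. If `R`-incomparable elements have commuting values, then the product over `L₂` starts with
the product over `L₁`. -/
lemma exists_pull_front {α M : Type*} [Monoid M] (R : α → α → Prop) (hR : ∀ x, R x x)
    (f : α → M) (hf : ∀ x y, ¬ R x y → ¬ R y x → Commute (f x) (f y)) :
    ∀ L₁ L₂ : List α, L₁.Pairwise (fun x y => ¬ R y x) → L₂.Pairwise (fun x y => ¬ R y x) →
      L₁ ⊆ L₂ → (∀ x ∈ L₁, ∀ y ∈ L₂, y ∉ L₁ → ¬ R y x) →
      ∃ L₃ : List α, (L₂.map f).prod = (L₁.map f).prod * (L₃.map f).prod ∧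
        L₁.length + L₃.length = L₂.length := by
  intro L₁
  induction L₁ with
  | nil => intro L₂ _ _ _ _; exact ⟨L₂, by simp, by simp⟩
  | cons x L₁ ih =>
    intro L₂ h₁ h₂ hsub hid
    obtain ⟨A, B, rfl⟩ := List.append_of_mem (hsub List.mem_cons_self)
    rw [List.pairwise_cons] at h₁
    rw [List.pairwise_append, List.pairwise_cons] at h₂
    obtain ⟨hA, ⟨hxB, hB⟩, hAB⟩ := h₂
    have hxA : ∀ y ∈ A, ¬ R x y := fun y hy => hAB y hy x List.mem_cons_self
    have hcomm : Commute (A.map f).prod (f x) := by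
      apply List.prod_induction (p := fun z => Commute z (f x))
      · intro a b ha hb; exact ha.mul_left hb
      · exact Commute.one_left _
      · intro z hz
        obtain ⟨y, hy, rfl⟩ := List.mem_map.1 hz
        refine hf y x ?_ (hxA y hy)
        by_cases hyL : y ∈ x :: L₁
        · rcases List.mem_cons.1 hyL with rfl | hyL
          · exact absurd (hR y) (hxA y hy)
          · exact h₁.1 y hyL
        · exact hid x List.mem_cons_self y (by simp [hy]) hyL
    obtain ⟨L₃, h3, h4⟩ := ih (A ++ B) h₁.2 (by
        rw [List.pairwise_append]
        exact ⟨hA, hB, fun a ha b hb => hAB a ha b (List.mem_cons_of_mem _ hb)⟩) (by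
        intro y hy
        have := hsub (List.mem_cons_of_mem x hy)
        rcases List.mem_append.1 this with h | h
        · exact List.mem_append_left _ h
        · rcases List.mem_cons.1 h with rfl | h
          · exact absurd (hR y) (h₁.1 y hy)
          · exact List.mem_append_right _ h) (by
        intro z hz y hy hyL
        refine hid z (List.mem_cons_of_mem _ hz) y ?_ ?_
        · rcases List.mem_append.1 hy with h | h
          · exact List.mem_append_left _ h
          · exact List.mem_append_right _ (List.mem_cons_of_mem _ h)
        · intro h
          rcases List.mem_cons.1 h with rfl | h
          · rcases List.mem_append.1 hy with h | h
            · exact hxA y h (hR y)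
            · exact hxB y h (hR y)
          · exact hyL h)
    refine ⟨L₃, ?_, ?_⟩
    · simp only [List.map_append, List.map_cons, List.prod_append, List.prod_cons] at h3 ⊢
      rw [← mul_assoc, hcomm.eq, mul_assoc, h3, mul_assoc]
    · simp only [List.length_append, List.length_cons] at h4 ⊢
      omega

/-! ### Simple reflections in coordinates -/

lemma pairSimple_eq (κ : ℕ) [NeZero κ] (ζ : Hw κ) (i : ZMod κ) :
    pairSimple κ ζ i = 2 * ζ.1 i - ζ.1 (i - 1) - ζ.1 (i + 1) +
      ζ.2 * (if i = 0 then 1 else 0) := by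
  unfold pairSimple cartan
  rw [finsum_eq_sum_of_fintype]
  have h1 : ∀ j : ZMod κ, (i - j = 1) ↔ (i - 1 = j) := fun j =>
    ⟨fun h => by rw [← h]; ring, fun h => by rw [← h]; ring⟩
  have h2 : ∀ j : ZMod κ, (i - j = -1) ↔ (i + 1 = j) := fun j =>
    ⟨fun h => by linear_combination h, fun h => by rw [← h]; ring⟩
  simp only [h1, h2, mul_add, Finset.sum_add_distrib, mul_ite, mul_zero,
    Finset.sum_ite_eq, Finset.mem_univ, if_true]
  ring

lemma sFun_snd (κ : ℕ) (i : ZMod κ) (ζ : Hw κ) : (sFun κ i ζ).2 = ζ.2 := by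
  simp [sFun, alphaR]

lemma sFun_fst_same (κ : ℕ) (i : ZMod κ) (ζ : Hw κ) :
    (sFun κ i ζ).1 i = ζ.1 i - pairSimple κ ζ i := by
  simp [sFun, alphaR]

lemma sFun_fst_ne (κ : ℕ) {i j : ZMod κ} (h : j ≠ i) (ζ : Hw κ) :
    (sFun κ i ζ).1 j = ζ.1 j := by
  simp [sFun, alphaR, h]

lemma sFun_comm (κ : ℕ) [NeZero κ] {i j : ZMod κ} (h1 : i ≠ j + 1) (h2 : i ≠ j - 1) :
    sFun κ i ∘ sFun κ j = sFun κ j ∘ sFun κ i := by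
  rcases eq_or_ne i j with rfl | h0
  · rfl
  have key : ∀ i j : ZMod κ, i ≠ j → i ≠ j + 1 → i ≠ j - 1 → ∀ ζ,
      pairSimple κ (sFun κ j ζ) i = pairSimple κ ζ i := by
    intro i j h0 h1 h2 ζ
    rw [pairSimple_eq, pairSimple_eq κ ζ, sFun_snd, sFun_fst_ne κ h0, sFun_fst_ne κ, sFun_fst_ne κ]
    · intro h; exact h2 (by rw [← h]; ring)
    · intro h; exact h1 (by rw [← h]; ring)
  funext ζ
  have k1 := key i j h0 h1 h2 ζ
  have k2 := key j i h0.symm (by rintro rfl; exact h2 (by ring)) (by rintro rfl; exact h1 (by ring)) ζ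
  show sFun κ j ζ - pairSimple κ (sFun κ j ζ) i • alphaR κ i =
    sFun κ i ζ - pairSimple κ (sFun κ i ζ) j • alphaR κ j
  rw [k1, k2]
  unfold sFun
  abel

/-! ### Level-zero weights and the height bound -/

/-- Level-zero weights `ζ = Σ c_i α_i` whose differences `c_i - c_{i+1}` take at most the two
values `-t` and `1 - t`. Boundaries of cylindric diagrams give such weights. -/
def Good (κ : ℕ) (ζ : Hw κ) : Prop :=
  ζ.2 = 0 ∧ ∃ t : ℚ, ∀ i, ζ.1 i - ζ.1 (i + 1) + t = 0 ∨ ζ.1 i - ζ.1 (i + 1) + t = 1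

/-- The height `Σ c_i` of `Σ c_i α_i + t Λ₀`. -/
def height (κ : ℕ) [NeZero κ] (ζ : Hw κ) : ℚ := ∑ i, ζ.1 i

/-- The differences `c_{i-1} - c_i` and `c_i - c_{i+1}` are exchanged by `s_i`. -/
lemma Good.sFun {κ : ℕ} [NeZero κ] (hκ : (1 : ZMod κ) ≠ 0) {ζ : Hw κ} (h : Good κ ζ)
    (i : ZMod κ) : Good κ (sFun κ i ζ) := by
  obtain ⟨h0, t, ht⟩ := h
  refine ⟨by rw [sFun_snd, h0], t, fun j => ?_⟩
  have hp := pairSimple_eq κ ζ i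
  rw [h0, zero_mul, add_zero] at hp
  by_cases hj : j = i
  · subst hj
    rw [sFun_fst_same, sFun_fst_ne κ (by simpa using hκ), hp]
    have := ht (j - 1)
    rw [sub_add_cancel] at this
    convert this using 2 <;> ring
  · by_cases hj' : j + 1 = i
    · subst hj'
      rw [sFun_fst_same, sFun_fst_ne κ hj, hp, add_sub_cancel_right]
      convert ht (j + 1) using 2 <;> ring
    · rw [sFun_fst_ne κ hj, sFun_fst_ne κ hj']
      exact ht j

lemma height_sFun (κ : ℕ) [NeZero κ] (i : ZMod κ) (ζ : Hw κ) :
    height κ (sFun κ i ζ) = height κ ζ - pairSimple κ ζ i := by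
  simp [height, sFun, alphaR, Finset.sum_sub_distrib, ← Finset.mul_sum]

lemma Good.pairSimple_ge {κ : ℕ} [NeZero κ] {ζ : Hw κ} (h : Good κ ζ) (i : ZMod κ) :
    -1 ≤ pairSimple κ ζ i := by
  obtain ⟨h0, t, ht⟩ := h
  have h1 := ht i
  have h2 := ht (i - 1)
  rw [sub_add_cancel] at h2
  rw [pairSimple_eq, h0, zero_mul, add_zero]
  rcases h1 with h1 | h1 <;> rcases h2 with h2 | h2 <;> linarith

lemma Good.wordProd {κ : ℕ} [NeZero κ] (hκ : (1 : ZMod κ) ≠ 0) {ζ : Hw κ} (h : Good κ ζ)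
    (L : List (ZMod κ)) :
    Good κ (wordProd κ L ζ) ∧ height κ (wordProd κ L ζ) ≤ height κ ζ + L.length := by
  induction L with
  | nil => exact ⟨h, by simp [CylPaper.wordProd]⟩
  | cons i L ih =>
    change Good κ (CylPaper.sFun κ i (CylPaper.wordProd κ L ζ)) ∧
      height κ (CylPaper.sFun κ i (CylPaper.wordProd κ L ζ)) ≤ _
    refine ⟨ih.1.sFun hκ i, ?_⟩
    have := ih.1.pairSimple_ge i
    rw [height_sFun, List.length_cons]
    push_cast
    linarith [ih.2]

/-! ### The boundary of a diagram -/

/-- `A` records the boundary of `θ`: on the diagonal of integral content `i`, the cells of `θ`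
are the `(a, a + i)` with `a ≤ A i`. -/
def IsBoundary (m l : ℕ) (θ : Set (Cyl m l)) (A : ℤ → ℤ) : Prop :=
  ∀ a i : ℤ, pr m l (a, a + i) ∈ θ ↔ a ≤ A i

/-- The level-zero weight `Σ (A i + m i / κ) α_i` attached to a boundary `A`. -/
def bdWeight (m l : ℕ) (A : ℤ → ℤ) : Hw (m + l) :=
  (fun j => (A j.val : ℚ) + (m : ℚ) * j.val / ((m + l : ℕ) : ℚ), 0)

lemma pr_eq_iff {m l : ℕ} {p q : Z2} :
    pr m l p = pr m l q ↔ ∃ k : ℤ, q.1 = p.1 + k * m ∧ q.2 = p.2 - k * l := by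
  have : pr m l p = pr m l q ↔ -p + q ∈ AddSubgroup.zmultiples (om m l) := QuotientAddGroup.eq
  rw [this, AddSubgroup.mem_zmultiples_iff]
  refine exists_congr fun k => ?_
  rw [Prod.ext_iff]
  simp only [om, Prod.smul_fst, Prod.smul_snd, Prod.fst_add, Prod.snd_add, Prod.fst_neg,
    Prod.snd_neg, smul_eq_mul, mul_neg]
  constructor <;> rintro ⟨h1, h2⟩ <;> constructor <;> linarith

lemma con_pr (m l : ℕ) (p : Z2) : con m l (pr m l p) = ((p.2 - p.1 : ℤ) : ZMod (m + l)) := rfl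

lemma exists_diag {m l : ℕ} (x : Cyl m l) :
    ∃ a i : ℤ, x = pr m l (a, a + i) ∧ con m l x = (i : ZMod (m + l)) := by
  obtain ⟨⟨a, b⟩, rfl⟩ := QuotientAddGroup.mk'_surjective _ x
  refine ⟨a, b - a, ?_, con_pr m l (a, b)⟩
  rw [add_sub_cancel]; rfl

lemma cle_pr (m l : ℕ) {p q : Z2} (h1 : q.1 ≤ p.1) (h2 : q.2 ≤ p.2) :
    cle m l (pr m l p) (pr m l q) := ⟨p, q, rfl, rfl, h1, h2⟩

lemma cle_refl (m l : ℕ) (x : Cyl m l) : cle m l x x := by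
  obtain ⟨a, i, rfl, -⟩ := exists_diag x
  exact cle_pr m l le_rfl le_rfl

/-- A cell can be lifted to any diagonal whose integral content is a lift of its content. -/
lemma exists_lift_diag {m l : ℕ} (x : Cyl m l) (i : ℤ) (h : con m l x = (i : ZMod (m + l))) :
    ∃ a : ℤ, x = pr m l (a, a + i) := by
  obtain ⟨a, j, rfl, hj⟩ := exists_diag x
  rw [hj, ZMod.intCast_eq_intCast_iff_dvd_sub] at h
  obtain ⟨q, hq⟩ := h
  push_cast at hq
  refine ⟨a - q * m, pr_eq_iff.2 ⟨-q, by simp only []; ring, ?_⟩⟩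
  have : i = j + (m + l) * q := by linarith
  simp only [this]; ring

lemma commute_of_incomparable {m l : ℕ} [NeZero (m + l)] (x y : Cyl m l)
    (h1 : ¬ cle m l x y) (h2 : ¬ cle m l y x) :
    sFun (m + l) (con m l x) ∘ sFun (m + l) (con m l y) =
      sFun (m + l) (con m l y) ∘ sFun (m + l) (con m l x) := by
  -- cells on neighbouring diagonals are comparable
  have key : ∀ x y : Cyl m l, con m l y = con m l x + 1 → cle m l x y ∨ cle m l y x := by
    intro x y h
    obtain ⟨a, i, rfl, hi⟩ := exists_diag x
    obtain ⟨b, rfl⟩ := exists_lift_diag y (i + 1) (by rw [h, hi]; push_cast; rfl)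
    rcases le_or_gt a b with hab | hab
    · exact Or.inr (cle_pr m l hab (by simp only []; omega))
    · exact Or.inl (cle_pr m l hab.le (by simp only []; omega))
  apply sFun_comm
  · intro h
    rcases key y x h with h | h
    · exact h2 h
    · exact h1 h
  · intro h
    rcases key x y (by rw [h]; ring) with h | h
    · exact h1 h
    · exact h2 h

lemma exists_boundary {m l : ℕ} {θ : Set (Cyl m l)}
    (h : IsCylindric m l θ) : ∃ A, IsBoundary m l θ A := by
  obtain ⟨⟨x, hx⟩, hne, hup⟩ := h
  obtain ⟨y, hy⟩ := (Set.ne_univ_iff_exists_notMem θ).1 hne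
  obtain ⟨a, i, rfl, -⟩ := exists_diag x
  obtain ⟨b, j, rfl, -⟩ := exists_diag y
  have hup' : ∀ c d k : ℤ, d ≤ c → pr m l (c, c + k) ∈ θ → pr m l (d, d + k) ∈ θ :=
    fun c d k hcd hc => hup _ hc _ (cle_pr m l hcd (by simpa using hcd))
  have : ∀ k : ℤ, ∃ n : ℤ, ∀ c : ℤ, pr m l (c, c + k) ∈ θ ↔ c ≤ n := by
    intro k
    have hex : ∃ c : ℤ, pr m l (c, c + k) ∈ θ :=
      ⟨min a (a + i - k), hup _ hx _ (cle_pr m l (min_le_left _ _) (by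
        have := min_le_right a (a + i - k)
        simp only []; omega))⟩
    have hbd : ∀ c : ℤ, pr m l (c, c + k) ∈ θ → c ≤ max b (b + j - k) := by
      intro c hc
      by_contra hlt
      have h1 := le_max_left b (b + j - k)
      have h2 := le_max_right b (b + j - k)
      exact hy (hup _ hc _ (cle_pr m l (by simp only []; omega) (by simp only []; omega)))
    obtain ⟨n, hn, hn'⟩ := Int.exists_greatest_of_bdd ⟨_, hbd⟩ hex
    exact ⟨n, fun c => ⟨hn' c, fun hc => hup' n c k hc hn⟩⟩
  choose A hA using this
  exact ⟨A, fun a i => hA i a⟩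

lemma IsBoundary.shift {m l : ℕ} {θ : Set (Cyl m l)} {A : ℤ → ℤ} (h : IsBoundary m l θ A)
    (i q : ℤ) : A (i + (m + l) * q) = A i - m * q := by
  have key : ∀ a : ℤ, a ≤ A i - m * q ↔ a ≤ A (i + (m + l) * q) := by
    intro a
    have : pr m l (a, a + (i + (m + l) * q)) = pr m l (a + m * q, a + m * q + i) :=
      pr_eq_iff.2 ⟨q, by simp only []; ring, by simp only []; ring⟩
    rw [← h a, this, h]
    constructor <;> intro <;> linarith
  exact le_antisymm ((key _).2 le_rfl) ((key _).1 le_rfl)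

lemma IsBoundary.weight_apply {m l : ℕ} [NeZero (m + l)] {θ : Set (Cyl m l)} {A : ℤ → ℤ}
    (h : IsBoundary m l θ A) (i : ℤ) :
    (bdWeight m l A).1 (i : ZMod (m + l)) = A i + (m : ℚ) * i / ((m + l : ℕ) : ℚ) := by
  have hκ : ((m + l : ℕ) : ℚ) ≠ 0 := Nat.cast_ne_zero.2 (NeZero.ne _)
  have hv : (((i : ZMod (m + l)).val : ℕ) : ℤ) = i % ((m + l : ℕ) : ℤ) := ZMod.val_intCast i
  have hi : i = (((i : ZMod (m + l)).val : ℕ) : ℤ) + (m + l) * (i / ((m + l : ℕ) : ℤ)) := by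
    rw [hv]
    have := Int.emod_add_mul_ediv i ((m + l : ℕ) : ℤ)
    push_cast at this ⊢
    exact this.symm
  generalize i / ((m + l : ℕ) : ℤ) = q at hi
  have hs := h.shift (((i : ZMod (m + l)).val : ℕ) : ℤ) q
  rw [← hi] at hs
  have hiQ : (i : ℚ) = ((i : ZMod (m + l)).val : ℚ) + (m + l) * q := by exact_mod_cast hi
  rw [hs, hiQ]
  simp only [bdWeight]
  push_cast at hκ ⊢
  field_simp
  ring

/-- Consecutive diagonals of an order filter: the boundary is a lattice path. -/
lemma IsBoundary.step {m l : ℕ} {θ : Set (Cyl m l)} {A : ℤ → ℤ} (h : IsBoundary m l θ A)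
    (hup : ∀ x ∈ θ, ∀ y, cle m l x y → y ∈ θ) (i : ℤ) :
    A (i + 1) ≤ A i ∧ A i ≤ A (i + 1) + 1 := by
  constructor
  · rw [← h]
    exact hup _ ((h _ _).2 le_rfl) _ (cle_pr m l le_rfl (by simp only []; omega))
  · have : A i - 1 ≤ A (i + 1) := by
      rw [← h]
      exact hup _ ((h (A i) i).2 le_rfl) _
        (cle_pr m l (by simp only []; omega) (by simp only []; omega))
    omega

lemma IsBoundary.good {m l : ℕ} [NeZero (m + l)] {θ : Set (Cyl m l)} {A : ℤ → ℤ}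
    (h : IsBoundary m l θ A) (hup : ∀ x ∈ θ, ∀ y, cle m l x y → y ∈ θ) :
    Good (m + l) (bdWeight m l A) := by
  refine ⟨rfl, (m : ℚ) / ((m + l : ℕ) : ℚ), fun j => ?_⟩
  obtain ⟨i, rfl⟩ := ZMod.intCast_surjective j
  have h1 := h.weight_apply i
  have h2 := h.weight_apply (i + 1)
  push_cast at h1 h2 ⊢
  rw [h1, h2]
  have hs := h.step hup i
  rcases (by omega : A i = A (i + 1) ∨ A i = A (i + 1) + 1) with e | e
  · left; rw [e]; ring
  · right; rw [e]; push_cast; ring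

/-- Adding an addable cell `x` is the simple reflection of content `con x`, and the corresponding
coroot has pairing `-1` with the weight of the smaller diagram. -/
lemma sFun_bdWeight {m l : ℕ} [NeZero (m + l)] (hκ : (1 : ZMod (m + l)) ≠ 0)
    {θ θ' : Set (Cyl m l)} {A A' : ℤ → ℤ} (h : IsBoundary m l θ A) (h' : IsBoundary m l θ' A')
    (hup : ∀ x ∈ θ, ∀ y, cle m l x y → y ∈ θ) (x : Cyl m l) (hx : x ∈ θ)
    (hmin : ∀ y ∈ θ, cle m l y x → y = x) (hθ' : ∀ y, y ∈ θ' ↔ y ∈ θ ∧ y ≠ x) :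
    pairSimple (m + l) (bdWeight m l A') (con m l x) = -1 ∧
      sFun (m + l) (con m l x) (bdWeight m l A') = bdWeight m l A := by
  obtain ⟨a, i, rfl, hi⟩ := exists_diag x
  rw [hi]
  -- the value of the boundaries near the removed corner
  have hA1 : ¬ a + 1 ≤ A (i - 1) := by
    rw [← h]
    intro hc
    have := congrArg (con m l) (hmin _ hc (cle_pr m l (by simp only []; omega)
      (by simp only []; omega)))
    rw [con_pr, con_pr] at this
    push_cast at this
    apply hκ
    linear_combination -this
  have hA2 : ¬ a ≤ A (i + 1) := by
    rw [← h]
    intro hc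
    have := congrArg (con m l) (hmin _ hc (cle_pr m l (by simp only []; omega)
      (by simp only []; omega)))
    rw [con_pr, con_pr] at this
    push_cast at this
    apply hκ
    linear_combination this
  have hA3 := (h a i).1 hx
  have s1 := h.step hup i
  have s2 := h.step hup (i - 1)
  rw [sub_add_cancel] at s2
  have hne : ∀ j : ℤ, (j : ZMod (m + l)) ≠ i → A' j = A j := by
    intro j hj
    have key : ∀ b : ℤ, b ≤ A' j ↔ b ≤ A j := by
      intro b
      rw [← h, ← h', hθ', and_iff_left]
      intro hc
      apply hj
      have := congrArg (con m l) hc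
      rw [con_pr, con_pr] at this
      simpa using this
    exact le_antisymm ((key _).1 le_rfl) ((key _).2 le_rfl)
  have hA'i : A' i = A i - 1 := by
    have key : ∀ b : ℤ, b ≤ A' i ↔ b ≤ A i - 1 := by
      intro b
      rw [← h', hθ', h]
      have : pr m l (b, b + i) = pr m l (a, a + i) ↔ a = b := by
        constructor
        · intro hc
          obtain ⟨k, hk1, hk2⟩ := pr_eq_iff.1 hc
          simp only [] at hk1 hk2
          have : k * ((m + l : ℕ) : ℤ) = 0 := by push_cast; linarith
          rcases mul_eq_zero.1 this with hk | hk
          · rw [hk] at hk1; linarith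
          · exact absurd (by exact_mod_cast hk) (NeZero.ne (m + l))
        · rintro rfl; rfl
      rw [Ne, this]
      omega
    exact le_antisymm ((key _).1 le_rfl) ((key _).2 le_rfl)
  have hp : pairSimple (m + l) (bdWeight m l A') (i : ZMod (m + l)) = -1 := by
    rw [pairSimple_eq]
    have e1 := h'.weight_apply (i - 1)
    have e2 := h'.weight_apply (i + 1)
    have n1 := hne (i - 1) (by push_cast; simpa using hκ)
    have n2 := hne (i + 1) (by push_cast; simpa using hκ)
    rw [n1, show A (i - 1) = a by omega] at e1
    rw [n2, show A (i + 1) = a - 1 by omega] at e2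
    push_cast at e1 e2
    rw [h'.weight_apply, e1, e2, hA'i, show A i = a by omega,
      show (bdWeight m l A').2 = 0 from rfl]
    push_cast
    ring
  refine ⟨hp, ?_⟩
  refine Prod.ext (funext fun j => ?_) (sFun_snd _ _ _)
  obtain ⟨k, rfl⟩ := ZMod.intCast_surjective j
  by_cases hk : (k : ZMod (m + l)) = i
  · rw [hk, sFun_fst_same, hp, h.weight_apply, h'.weight_apply, hA'i]
    push_cast
    ring
  · rw [sFun_fst_ne _ hk, h.weight_apply, h'.weight_apply, hne k hk]

/-! ### Tableaux give reduced words -/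

/-- The diagram left over after the first `n` cells of a tableau are removed. -/
def remaining (m l : ℕ) (e : ℕ → Cyl m l) (n : ℕ) : Set (Cyl m l) := e '' {a | n < a}

lemma isCylindric_remaining {m l : ℕ} {θ : Set (Cyl m l)} (hθ : IsCylindric m l θ)
    {e : ℕ → Cyl m l} (h : IsTableau m l θ e) (n : ℕ) :
    IsCylindric m l (remaining m l e n) := by
  obtain ⟨hinj, him, hlt⟩ := h
  have hsub : remaining m l e n ⊆ θ := by
    rw [← him]
    exact Set.image_mono fun a (ha : n < a) => show 1 ≤ a by omega
  refine ⟨⟨e (n + 1), n + 1, Nat.lt_succ_self n, rfl⟩, ?_, ?_⟩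
  · intro hu
    exact hθ.2.1 (Set.eq_univ_of_univ_subset (hu ▸ hsub))
  · rintro _ ⟨a, ha, rfl⟩ y hy
    have ha' : n < a := ha
    have hyθ := hθ.2.2 _ (hsub ⟨a, ha, rfl⟩) y hy
    rw [← him] at hyθ
    obtain ⟨b, hb, rfl⟩ := hyθ
    by_cases hab : e a = e b
    · rw [← hab]; exact ⟨a, ha, rfl⟩
    · have := hlt a b (by omega) hb hy hab
      exact ⟨b, show n < b by omega, rfl⟩

lemma tabWord_succ (m l : ℕ) (e : ℕ → Cyl m l) (n : ℕ) :
    tabWord m l e (n + 1) = tabWord m l e n ++ [con m l (e (n + 1))] := by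
  simp [tabWord, List.range_succ]

lemma len_tabWord {m l : ℕ} (hm : 1 ≤ m) (hl : 1 ≤ l) {θ : Set (Cyl m l)}
    (hθ : IsCylindric m l θ) {e : ℕ → Cyl m l} (h : IsTableau m l θ e) (n : ℕ) :
    IsReducedWord (m + l) (tabWord m l e n) := by
  have : NeZero (m + l) := ⟨by omega⟩
  have : Fact (1 < m + l) := ⟨by omega⟩
  have hκ : (1 : ZMod (m + l)) ≠ 0 := one_ne_zero
  choose A hA using fun k => exists_boundary (isCylindric_remaining hθ h k)
  have hstep : ∀ k, pairSimple (m + l) (bdWeight m l (A (k + 1))) (con m l (e (k + 1))) = -1 ∧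
      sFun (m + l) (con m l (e (k + 1))) (bdWeight m l (A (k + 1))) = bdWeight m l (A k) := by
    intro k
    refine sFun_bdWeight hκ (hA k) (hA (k + 1)) (isCylindric_remaining hθ h k).2.2 _
      ⟨k + 1, Nat.lt_succ_self k, rfl⟩ ?_ ?_
    · rintro _ ⟨a, ha, rfl⟩ hle
      have ha' : k < a := ha
      by_contra hne
      have := h.2.2 a (k + 1) (by omega) (by omega) hle hne
      omega
    · intro y
      constructor
      · rintro ⟨a, ha, rfl⟩
        have ha' : k + 1 < a := ha
        refine ⟨⟨a, show k < a by omega, rfl⟩, fun heq => ?_⟩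
        have := h.1 (show 1 ≤ a by omega) (show 1 ≤ k + 1 by omega) heq
        omega
      · rintro ⟨⟨a, ha, rfl⟩, hne⟩
        have ha' : k < a := ha
        have : a ≠ k + 1 := fun heq => hne (by rw [heq])
        exact ⟨a, show k + 1 < a by omega, rfl⟩
  have hprod : ∀ k, wordProd (m + l) (tabWord m l e k) (bdWeight m l (A k)) =
      bdWeight m l (A 0) ∧
      height (m + l) (bdWeight m l (A 0)) = height (m + l) (bdWeight m l (A k)) + k := by
    intro k
    induction k with
    | zero => exact ⟨rfl, by simp⟩
    | succ k ih =>
      constructor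
      · rw [tabWord_succ, wordProd_append, ← ih.1, ← (hstep k).2]; rfl
      · rw [ih.2, ← (hstep k).2, height_sFun, (hstep k).1]
        push_cast
        ring
  have hlen : (tabWord m l e n).length = n := by simp [tabWord]
  refine le_antisymm (len_le _ _) ?_
  obtain ⟨L, hL1, hL2⟩ := exists_word_len (m + l) (tabWord m l e n)
  have hb := (((hA n).good (isCylindric_remaining hθ h n).2.2).wordProd hκ L).2
  rw [hL2, (hprod n).1, (hprod n).2, hL1] at hb
  rw [hlen]
  have hq : (n : ℚ) ≤ (len (m + l) (wordProd (m + l) (tabWord m l e n)) : ℚ) := by linarith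
  exact_mod_cast hq

/-! ### Comparison of two tableaux -/

/-- The list of the first `n` cells of a tableau. -/
def cellList {m l : ℕ} (e : ℕ → Cyl m l) (n : ℕ) : List (Cyl m l) :=
  (List.range n).map fun k => e (k + 1)

lemma mem_cellList {m l : ℕ} {e : ℕ → Cyl m l} {n : ℕ} {x : Cyl m l} :
    x ∈ cellList e n ↔ ∃ a, 1 ≤ a ∧ a ≤ n ∧ e a = x := by
  simp only [cellList, List.mem_map, List.mem_range]
  constructor
  · rintro ⟨k, hk, rfl⟩; exact ⟨k + 1, by omega, by omega, rfl⟩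
  · rintro ⟨a, h1, h2, rfl⟩; exact ⟨a - 1, by omega, by rw [Nat.sub_add_cancel h1]⟩

/-- The simple reflection as an element of the monoid of self-maps under composition; the bare
function type would carry the pointwise product instead. -/
noncomputable def sEnd (κ : ℕ) (i : ZMod κ) : Function.End (Hw κ) := sFun κ i

lemma wordProd_map_con {m l : ℕ} (L : List (Cyl m l)) :
    wordProd (m + l) (L.map (con m l)) =
      (L.map fun x => sEnd (m + l) (con m l x)).prod := by
  induction L with
  | nil => rfl
  | cons x L ih =>
    rw [List.map_cons, List.map_cons, List.prod_cons, ← ih]; rfl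

lemma tabWord_eq_map (m l : ℕ) (e : ℕ → Cyl m l) (n : ℕ) :
    tabWord m l e n = (cellList e n).map (con m l) := by
  simp [tabWord, cellList]

lemma pairwise_cellList {m l : ℕ} {θ : Set (Cyl m l)} {e : ℕ → Cyl m l}
    (h : IsTableau m l θ e) (n : ℕ) :
    (cellList e n).Pairwise (fun x y => ¬ cle m l y x) := by
  refine List.Pairwise.map _ (R := (· < ·)) ?_ List.pairwise_lt_range
  intro a b hab hle
  have hne : e (b + 1) ≠ e (a + 1) := fun heq => by
    have := h.1 (show 1 ≤ b + 1 by omega) (show 1 ≤ a + 1 by omega) heq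
    omega
  have := h.2.2 _ _ (by omega) (by omega) hle hne
  omega

/-- Every initial word of `e1` lies below some initial word of `e2` in the weak order. -/
lemma exists_wble {m l : ℕ} (hm : 1 ≤ m) (hl : 1 ≤ l) {θ : Set (Cyl m l)}
    (hθ : IsCylindric m l θ) {e1 e2 : ℕ → Cyl m l} (h1 : IsTableau m l θ e1)
    (h2 : IsTableau m l θ e2) (n : ℕ) :
    ∃ N, 1 ≤ N ∧ wble (m + l) (wordProd (m + l) (tabWord m l e1 n))
      (wordProd (m + l) (tabWord m l e2 N)) := by
  have : NeZero (m + l) := ⟨by omega⟩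
  have hex : ∀ a, ∃ b, 1 ≤ a → 1 ≤ b ∧ e2 b = e1 a := by
    intro a
    by_cases ha : 1 ≤ a
    · have : e1 a ∈ e2 '' {a | 1 ≤ a} := by rw [h2.2.1, ← h1.2.1]; exact ⟨a, ha, rfl⟩
      obtain ⟨b, hb, hb'⟩ := this
      exact ⟨b, fun _ => ⟨hb, hb'⟩⟩
    · exact ⟨0, fun h => absurd h ha⟩
  choose g hg using hex
  let N := (Finset.range (n + 1)).sup g + 1
  have hsub : cellList e1 n ⊆ cellList e2 N := by
    intro x hx
    obtain ⟨a, ha1, ha2, rfl⟩ := mem_cellList.1 hx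
    have : g a ≤ (Finset.range (n + 1)).sup g :=
      Finset.le_sup (f := g) (Finset.mem_range.2 (by omega))
    exact mem_cellList.2 ⟨g a, (hg a ha1).1, by omega, (hg a ha1).2⟩
  obtain ⟨L₃, h3, h4⟩ := exists_pull_front (cle m l) (cle_refl m l)
    (fun x => sEnd (m + l) (con m l x))
    (fun x y hxy hyx => commute_of_incomparable x y hxy hyx)
    (cellList e1 n) (cellList e2 N) (pairwise_cellList h1 n) (pairwise_cellList h2 N) hsub (by
      intro x hx y hy hyn hle
      obtain ⟨a, ha1, ha2, rfl⟩ := mem_cellList.1 hx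
      obtain ⟨b, hb1, -, rfl⟩ := mem_cellList.1 hy
      have : e2 b ∈ e1 '' {a | 1 ≤ a} := by rw [h1.2.1, ← h2.2.1]; exact ⟨b, hb1, rfl⟩
      obtain ⟨c, hc1, hc⟩ := this
      rw [← hc] at hyn hle
      have hcn : ¬ c ≤ n := fun hcn => hyn (mem_cellList.2 ⟨c, hc1, hcn, rfl⟩)
      have := h1.2.2 c a hc1 ha1 hle (fun heq => hyn (by rw [heq]; exact hx))
      omega)
  have hw : wordProd (m + l) (tabWord m l e2 N) =
      wordProd (m + l) (tabWord m l e1 n ++ L₃.map (con m l)) := by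
    rw [tabWord_eq_map, tabWord_eq_map, ← List.map_append, wordProd_map_con, wordProd_map_con,
      List.map_append, List.prod_append]
    exact h3
  have hred := len_tabWord hm hl hθ h2 N
  refine ⟨N, by omega, ?_⟩
  rw [hw]
  apply wble_of_reduced
  unfold IsReducedWord at hred ⊢
  rw [← hw, hred, tabWord_eq_map, tabWord_eq_map]
  simp only [List.length_append, List.length_map]
  exact h4.symm

lemma semiInt_subset {m l : ℕ} (hm : 1 ≤ m) (hl : 1 ≤ l) {θ : Set (Cyl m l)}
    (hθ : IsCylindric m l θ) {e1 e2 : ℕ → Cyl m l} (h1 : IsTableau m l θ e1)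
    (h2 : IsTableau m l θ e2) : semiInt m l e1 ⊆ semiInt m l e2 := by
  intro x hx
  simp only [semiInt, Set.mem_iUnion] at hx ⊢
  obtain ⟨n, -, hx1, hx2⟩ := hx
  obtain ⟨N, hN, hle⟩ := exists_wble hm hl hθ h1 h2 n
  exact ⟨N, hN, hx1, Relation.ReflTransGen.trans hx2 hle⟩

/-- Proposition 4.5: the semi-infinite Bruhat interval [e, w_{θ,T}) does not
depend on the standard tableau T. -/
theorem statement_16 (m l : ℕ) (hm : 1 ≤ m) (hl : 1 ≤ l)
    (θ : Set (Cyl m l)) (hθ : IsCylindric m l θ)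
    (e1 e2 : ℕ → Cyl m l) (h1 : IsTableau m l θ e1) (h2 : IsTableau m l θ e2) :
    semiInt m l e1 = semiInt m l e2 := by
  exact Set.Subset.antisymm (semiInt_subset hm hl hθ h1 h2) (semiInt_subset hm hl hθ h2 h1)

end CylPaper
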